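/- Let λ > 0 and let F₁,…,F_p : ℝⁿ → ℝ (ℝⁿ = ℝᵐ × ℝᵈ) be twice continuously differentiable with ‖∇F_j(z)‖ ≤ L and ‖∇²F_j(z)‖ ≤ M for all z and j, and set φ_β = Σ_{j=1}^p β_j F_j. Then there exist δ > 0 and C ≥ 0 such that for every β with ‖β‖ ≤ δ, every z' ∈ ℝⁿ, and every global minimizer z̄ of z ↦ c_λ(z,z') − φ_β(z), one has |‖∇_yφ_β(z̄)‖²/λ + ‖∇_xφ_β(z̄)‖² − Σ_{j,k} β_j β_k ⟨∇F_j(z'), ∇_λF_k(z')⟩| ≤ C‖β‖³. -/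

import Mathlib

/-!
Put `φ = ∑ j, β j * F j` and `Q z = ‖∇_yφ z‖² / λ + ‖∇_xφ z‖²`. By bilinearity the double sum is
`Q z'`, so the claim compares `Q` at `z̄` and at `z'`. If `φ` is `A`-Lipschitz, testing minimality
against the competitor `z'` gives `c_λ(z̄, z') ≤ A ‖z̄ - z'‖`, and the quadratic growth of the cost
turns this into `‖z̄ - z'‖ = O(A)`. If moreover `fderiv ℝ φ` is `B`-Lipschitz, then `Q` varies by
`O(A * B * ‖z̄ - z'‖) = O(A² * B)`. Both `A` and `B` are `O(‖β‖)`, which makes the error cubic.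
-/


open scoped RealInnerProductSpace
open MeasureTheory

noncomputable section

/-- The product space `ℝᵐ × ℝᵈ` whose points are written `z = (y, x)`. -/
abbrev Zsp (m d : ℕ) := EuclideanSpace ℝ (Fin m) × EuclideanSpace ℝ (Fin d)

/-- Weighted quadratic cost `c_λ(z,z') = (1/2)(λ‖y−y'‖² + ‖x−x'‖²)`. -/
noncomputable def cost (lam : ℝ) {m d : ℕ} (z z' : Zsp m d) : ℝ :=
  (lam * ‖z.1 - z'.1‖ ^ 2 + ‖z.2 - z'.2‖ ^ 2) / 2

/-- The `c`-transform `φ^c(z') = inf_z (c_λ(z,z') − φ(z))`. -/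
noncomputable def ctrans (lam : ℝ) {m d : ℕ} (φ : Zsp m d → ℝ) (z' : Zsp m d) : ℝ :=
  ⨅ z : Zsp m d, (cost lam z z' - φ z)

/-- Partial gradient in the `y` variable. -/
noncomputable def gradY {m d : ℕ} (F : Zsp m d → ℝ) (z : Zsp m d) :
    EuclideanSpace ℝ (Fin m) :=
  gradient (fun y => F (y, z.2)) z.1

/-- Partial gradient in the `x` variable. -/
noncomputable def gradX {m d : ℕ} (F : Zsp m d → ℝ) (z : Zsp m d) :
    EuclideanSpace ℝ (Fin d) :=
  gradient (fun x => F (z.1, x)) z.2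

/-- Rescaled gradient `∇_λF(z) = (∇_yF(z)/λ, ∇_xF(z))`. -/
noncomputable def gradLam (lam : ℝ) {m d : ℕ} (F : Zsp m d → ℝ) (z : Zsp m d) : Zsp m d :=
  (lam⁻¹ • gradY F z, gradX F z)

/-- `⟨∇F(z), ∇_λG(z)⟩ = ⟨∇_yF(z), ∇_yG(z)⟩/λ + ⟨∇_xF(z), ∇_xG(z)⟩`. -/
noncomputable def innerLam (lam : ℝ) {m d : ℕ} (F G : Zsp m d → ℝ) (z : Zsp m d) : ℝ :=
  ⟪gradY F z, gradY G z⟫ / lam + ⟪gradX F z, gradX G z⟫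

open scoped NNReal

section Normed

variable {ι : Type*} [Fintype ι]

lemma abs_norm_sq_sub_norm_sq_le {E : Type*} [SeminormedAddCommGroup E] (a b : E) :
    |‖a‖ ^ 2 - ‖b‖ ^ 2| ≤ (‖a‖ + ‖b‖) * ‖a - b‖ := by
  rw [sq_sub_sq, abs_mul, abs_of_nonneg (by positivity)]
  gcongr
  exact abs_norm_sub_norm_le a b

lemma lipschitzWith_sum_smul {X E : Type*} [PseudoMetricSpace X] [SeminormedAddCommGroup E]
    [NormedSpace ℝ E] {K : ℝ≥0} {f : ι → X → E} (hf : ∀ j, LipschitzWith K (f j)) (β : ι → ℝ) :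
    LipschitzWith ((∑ j, ‖β j‖₊) * K) fun x => ∑ j, β j • f j x := by
  refine LipschitzWith.of_dist_le_mul fun x x' => ?_
  push_cast
  rw [Finset.sum_mul, Finset.sum_mul]
  refine dist_sum_sum_le_of_le _ fun j _ => ?_
  rw [dist_smul₀, mul_assoc]
  exact mul_le_mul_of_nonneg_left ((hf j).dist_le_mul x x') (norm_nonneg _)

lemma sum_norm_apply_le_card_mul_norm {p : ENNReal} [Fact (1 ≤ p)] {α : ι → Type*}
    [∀ i, SeminormedAddCommGroup (α i)] (x : PiLp p α) :
    ∑ i, ‖x i‖ ≤ Fintype.card ι * ‖x‖ := by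
  simpa using Finset.sum_le_card_nsmul Finset.univ _ _ fun i _ => PiLp.norm_apply_le x i

lemma inner_sum_smul_sum_smul {E : Type*} [SeminormedAddCommGroup E] [InnerProductSpace ℝ E]
    {κ : Type*} [Fintype κ] (β : ι → ℝ) (v : ι → E) (γ : κ → ℝ) (w : κ → E) :
    ⟪∑ j, β j • v j, ∑ k, γ k • w k⟫ = ∑ j, ∑ k, β j * γ k * ⟪v j, w k⟫ := by
  simp only [sum_inner, real_inner_smul_left]
  simp only [inner_sum, real_inner_smul_right, Finset.mul_sum, mul_assoc]

lemma fderiv_sum_mul {V : Type*} [NormedAddCommGroup V] [NormedSpace ℝ V] {F : ι → V → ℝ} {z : V}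
    (hF : ∀ j, DifferentiableAt ℝ (F j) z) (β : ι → ℝ) :
    fderiv ℝ (fun z => ∑ j, β j * F j z) z = ∑ j, β j • fderiv ℝ (F j) z :=
  (HasFDerivAt.fun_sum fun j _ => (hF j).hasFDerivAt.const_mul (β j)).fderiv

end Normed

section RieszComp

variable {E V : Type*} [NormedAddCommGroup E] [InnerProductSpace ℝ E] [CompleteSpace E]
  [NormedAddCommGroup V] [NormedSpace ℝ V]

/-- The Riesz representative in `E` of a functional on `V` pulled back along `A : E →L[ℝ] V`.
With `A` the inclusion of a factor into a product, it turns the Fréchet derivative into a partial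
gradient, so that both partial gradients are instances of one construction. -/
def rieszComp (A : E →L[ℝ] V) : StrongDual ℝ V →ₗ[ℝ] E where
  toFun T := (InnerProductSpace.toDual ℝ E).symm (T ∘L A)
  map_add' T T' := by rw [ContinuousLinearMap.add_comp, map_add]
  map_smul' c T := by simp [ContinuousLinearMap.smul_comp]

lemma norm_rieszComp_le {A : E →L[ℝ] V} (hA : ‖A‖ ≤ 1) (T : StrongDual ℝ V) :
    ‖rieszComp A T‖ ≤ ‖T‖ :=
  calc ‖rieszComp A T‖ = ‖T ∘L A‖ := (InnerProductSpace.toDual ℝ E).symm.norm_map _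
    _ ≤ ‖T‖ * ‖A‖ := T.opNorm_comp_le A
    _ ≤ ‖T‖ := mul_le_of_le_one_right (norm_nonneg T) hA

lemma abs_norm_rieszComp_sq_sub_le {A : E →L[ℝ] V} (hA : ‖A‖ ≤ 1) (T T' : StrongDual ℝ V) :
    |‖rieszComp A T‖ ^ 2 - ‖rieszComp A T'‖ ^ 2| ≤ (‖T‖ + ‖T'‖) * ‖T - T'‖ := by
  refine (abs_norm_sq_sub_norm_sq_le _ _).trans ?_
  rw [← map_sub]
  gcongr <;> exact norm_rieszComp_le hA _

lemma gradient_comp_eq_rieszComp {f : V → ℝ} {g : E → V} {A : E →L[ℝ] V} {x : E}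
    (hf : DifferentiableAt ℝ f (g x)) (hg : HasFDerivAt g A x) :
    gradient (fun x => f (g x)) x = rieszComp A (fderiv ℝ f (g x)) :=
  congrArg _ (hf.hasFDerivAt.comp x hg).fderiv

end RieszComp

section PartialGradients

variable {m d : ℕ} {ι : Type*} [Fintype ι]

lemma gradY_eq_rieszComp {F : Zsp m d → ℝ} {z : Zsp m d} (hF : DifferentiableAt ℝ F z) :
    gradY F z = rieszComp (.inl ℝ _ _) (fderiv ℝ F z) :=
  gradient_comp_eq_rieszComp hF (hasFDerivAt_prodMk_left z.1 z.2)

lemma gradX_eq_rieszComp {F : Zsp m d → ℝ} {z : Zsp m d} (hF : DifferentiableAt ℝ F z) :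
    gradX F z = rieszComp (.inr ℝ _ _) (fderiv ℝ F z) :=
  gradient_comp_eq_rieszComp hF (hasFDerivAt_prodMk_right z.1 z.2)

lemma abs_norm_gradY_sq_sub_le {F : Zsp m d → ℝ} {z w : Zsp m d}
    (hz : DifferentiableAt ℝ F z) (hw : DifferentiableAt ℝ F w) :
    |‖gradY F z‖ ^ 2 - ‖gradY F w‖ ^ 2| ≤
      (‖fderiv ℝ F z‖ + ‖fderiv ℝ F w‖) * ‖fderiv ℝ F z - fderiv ℝ F w‖ := by
  rw [gradY_eq_rieszComp hz, gradY_eq_rieszComp hw]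
  refine abs_norm_rieszComp_sq_sub_le ?_ _ _
  exact ContinuousLinearMap.norm_inl_le_one ℝ _ _

lemma abs_norm_gradX_sq_sub_le {F : Zsp m d → ℝ} {z w : Zsp m d}
    (hz : DifferentiableAt ℝ F z) (hw : DifferentiableAt ℝ F w) :
    |‖gradX F z‖ ^ 2 - ‖gradX F w‖ ^ 2| ≤
      (‖fderiv ℝ F z‖ + ‖fderiv ℝ F w‖) * ‖fderiv ℝ F z - fderiv ℝ F w‖ := by
  rw [gradX_eq_rieszComp hz, gradX_eq_rieszComp hw]
  refine abs_norm_rieszComp_sq_sub_le ?_ _ _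
  exact ContinuousLinearMap.norm_inr_le_one ℝ _ _

lemma gradY_sum_mul {F : ι → Zsp m d → ℝ} {z : Zsp m d} (hF : ∀ j, DifferentiableAt ℝ (F j) z)
    (β : ι → ℝ) : gradY (fun z => ∑ j, β j * F j z) z = ∑ j, β j • gradY (F j) z := by
  have hφ : DifferentiableAt ℝ (fun z => ∑ j, β j * F j z) z := by fun_prop
  simp only [gradY_eq_rieszComp hφ, gradY_eq_rieszComp (hF _), fderiv_sum_mul hF, map_sum, map_smul]

lemma gradX_sum_mul {F : ι → Zsp m d → ℝ} {z : Zsp m d} (hF : ∀ j, DifferentiableAt ℝ (F j) z)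
    (β : ι → ℝ) : gradX (fun z => ∑ j, β j * F j z) z = ∑ j, β j • gradX (F j) z := by
  have hφ : DifferentiableAt ℝ (fun z => ∑ j, β j * F j z) z := by fun_prop
  simp only [gradX_eq_rieszComp hφ, gradX_eq_rieszComp (hF _), fderiv_sum_mul hF, map_sum, map_smul]

lemma innerLam_self (lam : ℝ) (F : Zsp m d → ℝ) (z : Zsp m d) :
    innerLam lam F F z = ‖gradY F z‖ ^ 2 / lam + ‖gradX F z‖ ^ 2 := by
  simp only [innerLam, real_inner_self_eq_norm_sq]

lemma innerLam_sum_mul_sum_mul {κ : Type*} [Fintype κ] {F : ι → Zsp m d → ℝ}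
    {G : κ → Zsp m d → ℝ} {z : Zsp m d} (hF : ∀ j, DifferentiableAt ℝ (F j) z)
    (hG : ∀ k, DifferentiableAt ℝ (G k) z) (lam : ℝ) (β : ι → ℝ) (γ : κ → ℝ) :
    innerLam lam (fun z => ∑ j, β j * F j z) (fun z => ∑ k, γ k * G k z) z =
      ∑ j, ∑ k, β j * γ k * innerLam lam (F j) (G k) z := by
  simp only [innerLam, gradY_sum_mul hF, gradY_sum_mul hG, gradX_sum_mul hF, gradX_sum_mul hG,
    inner_sum_smul_sum_smul, Finset.sum_div, ← Finset.sum_add_distrib, mul_add, mul_div_assoc]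

lemma abs_innerLam_self_sub_le {lam : ℝ} (hlam : 0 < lam) {φ : Zsp m d → ℝ} {A B : ℝ≥0}
    (hφ : Differentiable ℝ φ) (hA : LipschitzWith A φ) (hB : LipschitzWith B (fderiv ℝ φ))
    (z w : Zsp m d) :
    |innerLam lam φ φ z - innerLam lam φ φ w| ≤ (lam⁻¹ + 1) * (2 * A * (B * ‖z - w‖)) := by
  have hderiv : (‖fderiv ℝ φ z‖ + ‖fderiv ℝ φ w‖) * ‖fderiv ℝ φ z - fderiv ℝ φ w‖
      ≤ 2 * A * (B * ‖z - w‖) := by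
    rw [two_mul]
    gcongr
    · exact norm_fderiv_le_of_lipschitz ℝ hA
    · exact norm_fderiv_le_of_lipschitz ℝ hA
    · exact hB.norm_sub_le z w
  have hY : |‖gradY φ z‖ ^ 2 - ‖gradY φ w‖ ^ 2| ≤ 2 * A * (B * ‖z - w‖) :=
    (abs_norm_gradY_sq_sub_le (hφ z) (hφ w)).trans hderiv
  have hX : |‖gradX φ z‖ ^ 2 - ‖gradX φ w‖ ^ 2| ≤ 2 * A * (B * ‖z - w‖) :=
    (abs_norm_gradX_sq_sub_le (hφ z) (hφ w)).trans hderiv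
  calc |innerLam lam φ φ z - innerLam lam φ φ w|
      = |lam⁻¹ * (‖gradY φ z‖ ^ 2 - ‖gradY φ w‖ ^ 2) + (‖gradX φ z‖ ^ 2 - ‖gradX φ w‖ ^ 2)| := by
        rw [innerLam_self, innerLam_self]
        ring_nf
    _ ≤ lam⁻¹ * |‖gradY φ z‖ ^ 2 - ‖gradY φ w‖ ^ 2| + |‖gradX φ z‖ ^ 2 - ‖gradX φ w‖ ^ 2| := by
        refine (abs_add_le _ _).trans_eq ?_
        rw [abs_mul, abs_of_pos (inv_pos.2 hlam)]
    _ ≤ lam⁻¹ * (2 * A * (B * ‖z - w‖)) + 2 * A * (B * ‖z - w‖) := by gcongr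
    _ = (lam⁻¹ + 1) * (2 * A * (B * ‖z - w‖)) := by ring

end PartialGradients

section Minimizers

variable {m d : ℕ} {lam : ℝ}

lemma cost_self (lam : ℝ) (z : Zsp m d) : cost lam z z = 0 := by
  simp [cost]

lemma min_one_mul_norm_sub_sq_le_cost (hlam : 0 ≤ lam) (z w : Zsp m d) :
    min lam 1 * ‖z - w‖ ^ 2 ≤ 2 * cost lam z w := by
  have hcost : 2 * cost lam z w = lam * ‖z.1 - w.1‖ ^ 2 + 1 * ‖z.2 - w.2‖ ^ 2 := by
    rw [cost]
    ring
  rw [hcost, Prod.norm_def, Prod.fst_sub, Prod.snd_sub]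
  rcases max_choice ‖z.1 - w.1‖ ‖z.2 - w.2‖ with h | h <;> rw [h]
  · exact le_add_of_le_of_nonneg (by gcongr; exact min_le_left lam 1) (by positivity)
  · exact le_add_of_nonneg_of_le (by positivity) (by gcongr; exact min_le_right lam 1)

lemma norm_sub_le_of_cost_sub_le (hlam : 0 < lam) {φ : Zsp m d → ℝ} {A : ℝ≥0}
    (hA : LipschitzWith A φ) {z w : Zsp m d} (hzw : cost lam z w - φ z ≤ cost lam w w - φ w) :
    ‖z - w‖ ≤ 2 * A / min lam 1 := by
  have hgain : φ z - φ w ≤ A * ‖z - w‖ := (le_abs_self _).trans (hA.norm_sub_le z w)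
  have hquad : ‖z - w‖ * min lam 1 * ‖z - w‖ ≤ 2 * A * ‖z - w‖ := by
    rw [cost_self] at hzw
    linarith [min_one_mul_norm_sub_sq_le_cost hlam.le z w]
  rw [le_div_iff₀ (lt_min hlam one_pos)]
  rcases (norm_nonneg (z - w)).eq_or_lt with h | h
  · rw [← h, zero_mul]
    positivity
  · exact le_of_mul_le_mul_right hquad h

lemma abs_innerLam_self_sub_le_of_cost_sub_le (hlam : 0 < lam) {φ : Zsp m d → ℝ} {A B : ℝ≥0}
    (hφ : Differentiable ℝ φ) (hA : LipschitzWith A φ) (hB : LipschitzWith B (fderiv ℝ φ))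
    {z w : Zsp m d} (hzw : cost lam z w - φ z ≤ cost lam w w - φ w) :
    |innerLam lam φ φ z - innerLam lam φ φ w| ≤
      (lam⁻¹ + 1) * (4 / min lam 1) * (A ^ 2 * B) :=
  calc |innerLam lam φ φ z - innerLam lam φ φ w|
      ≤ (lam⁻¹ + 1) * (2 * A * (B * ‖z - w‖)) := abs_innerLam_self_sub_le hlam hφ hA hB z w
    _ ≤ (lam⁻¹ + 1) * (2 * A * (B * (2 * A / min lam 1))) := by
        gcongr
        exact norm_sub_le_of_cost_sub_le hlam hA hzw
    _ = (lam⁻¹ + 1) * (4 / min lam 1) * (A ^ 2 * B) := by ring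

end Minimizers

theorem minimizer_quadratic_term_expansion_general {ι : Type*} [Fintype ι] {m d : ℕ} {lam : ℝ}
    (hlam : 0 < lam) {L M : ℝ≥0} {F : ι → Zsp m d → ℝ} (hF : ∀ j, Differentiable ℝ (F j))
    (hL : ∀ j, LipschitzWith L (F j)) (hM : ∀ j, LipschitzWith M (fderiv ℝ (F j)))
    (β : EuclideanSpace ℝ ι) {z' zbar : Zsp m d}
    (hzbar : cost lam zbar z' - ∑ j, β j * F j zbar ≤ cost lam z' z' - ∑ j, β j * F j z') :
    |‖gradY (fun z => ∑ j, β j * F j z) zbar‖ ^ 2 / lam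
        + ‖gradX (fun z => ∑ j, β j * F j z) zbar‖ ^ 2
        - ∑ j, ∑ k, β j * β k * innerLam lam (F j) (F k) z'|
      ≤ (lam⁻¹ + 1) * (4 / min lam 1) * (L ^ 2 * M) * Fintype.card ι ^ 3 * ‖β‖ ^ 3 := by
  have hφ : Differentiable ℝ fun z => ∑ j, β j * F j z := by fun_prop
  have hA : LipschitzWith ((∑ j, ‖β j‖₊) * L) fun z => ∑ j, β j * F j z :=
    lipschitzWith_sum_smul hL β
  have hB : LipschitzWith ((∑ j, ‖β j‖₊) * M) (fderiv ℝ fun z => ∑ j, β j * F j z) := by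
    rw [funext fun z => fderiv_sum_mul (fun j => hF j z) β]
    exact lipschitzWith_sum_smul hM β
  rw [← innerLam_self, ← innerLam_sum_mul_sum_mul (fun j => hF j z') (fun j => hF j z')]
  refine (abs_innerLam_self_sub_le_of_cost_sub_le hlam hφ hA hB hzbar).trans ?_
  push_cast
  calc (lam⁻¹ + 1) * (4 / min lam 1) * (((∑ j, ‖β j‖) * L) ^ 2 * ((∑ j, ‖β j‖) * M))
      = (lam⁻¹ + 1) * (4 / min lam 1) * (L ^ 2 * M) * (∑ j, ‖β j‖) ^ 3 := by ring
    _ ≤ (lam⁻¹ + 1) * (4 / min lam 1) * (L ^ 2 * M) * (Fintype.card ι * ‖β‖) ^ 3 := by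
        gcongr
        exact sum_norm_apply_le_card_mul_norm β
    _ = (lam⁻¹ + 1) * (4 / min lam 1) * (L ^ 2 * M) * Fintype.card ι ^ 3 * ‖β‖ ^ 3 := by ring

/-- uniform third-order estimate for the quadratic term evaluated at a
global minimizer `z̄`:
`‖∇_yφ_β(z̄)‖²/λ + ‖∇_xφ_β(z̄)‖² = Σ_{j,k} β_jβ_k ⟨∇F_j(z'), ∇_λF_k(z')⟩ + O(‖β‖³)`. -/
theorem minimizer_quadratic_term_expansion
    (m d p : ℕ) (lam L M : ℝ) (hlam : 0 < lam)
    (F : Fin p → Zsp m d → ℝ)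
    (hC2 : ∀ j, ContDiff ℝ 2 (F j))
    (hL : ∀ j z, ‖fderiv ℝ (F j) z‖ ≤ L)
    (hM : ∀ j z, ‖fderiv ℝ (fderiv ℝ (F j)) z‖ ≤ M) :
    ∃ δ > (0 : ℝ), ∃ C ≥ (0 : ℝ), ∀ β : EuclideanSpace ℝ (Fin p), ‖β‖ ≤ δ →
      ∀ z' zbar : Zsp m d,
        (∀ z : Zsp m d,
            cost lam zbar z' - (∑ j, β j * F j zbar)
              ≤ cost lam z z' - ∑ j, β j * F j z) →
          |‖gradY (fun z => ∑ j, β j * F j z) zbar‖ ^ 2 / lam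
              + ‖gradX (fun z => ∑ j, β j * F j z) zbar‖ ^ 2
              - ∑ j, ∑ k, β j * β k * innerLam lam (F j) (F k) z'|
            ≤ C * ‖β‖ ^ 3 := by
  have hF j : Differentiable ℝ (F j) := (hC2 j).differentiable two_ne_zero
  have hF' j : Differentiable ℝ (fderiv ℝ (F j)) :=
    ((hC2 j).fderiv_right (m := 1) one_add_one_eq_two.le).differentiable one_ne_zero
  exact ⟨1, one_pos, _, by positivity, fun β _ z' _ hzbar =>
    minimizer_quadratic_term_expansion_general hlam hF
      (fun j => lipschitzWith_of_nnnorm_fderiv_le (hF j) fun z =>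
        NNReal.le_toNNReal_of_coe_le (hL j z))
      (fun j => lipschitzWith_of_nnnorm_fderiv_le (hF' j) fun z =>
        NNReal.le_toNNReal_of_coe_le (hM j z)) β (hzbar z')⟩
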